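/- For every integer d ≥ 0, there exists a real number ε > 0 as follows: if G is a finite graph of maximum average degree less than d + 1 + 2/(d+4), then G with any list assignment in which every list has size d+2 is weighted ε-flexible. -/

import Mathlib

def IsLColoring {V : Type*} (G : SimpleGraph V) (L : V → Finset ℕ) (φ : V → ℕ) : Prop :=
  (∀ v, φ v ∈ L v) ∧ ∀ ⦃u w : V⦄, G.Adj u w → φ u ≠ φ w

def WeightTotal {V : Type*} [Fintype V] (L : V → Finset ℕ) (w : V → ℕ → ℝ) : ℝ :=
  ∑ v, ∑ c ∈ L v, w v c

def WEpsSat {V : Type*} [Fintype V] (G : SimpleGraph V) (L : V → Finset ℕ)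
    (w : V → ℕ → ℝ) (ε : ℝ) : Prop :=
  ∃ φ : V → ℕ, IsLColoring G L φ ∧ ε * WeightTotal L w ≤ ∑ v, w v (φ v)

def WFlexible {V : Type*} [Fintype V] (G : SimpleGraph V) (L : V → Finset ℕ) (ε : ℝ) : Prop :=
  ∀ w : V → ℕ → ℝ, (∀ v c, 0 ≤ w v c) → WEpsSat G L w ε

/-- The maximum average degree of `G` is less than `x`: every non-null subgraph `H`
satisfies `2|E(H)| < x·|V(H)|`. -/
def MadLT {V : Type*} (G : SimpleGraph V) (x : ℝ) : Prop :=
  ∀ H : G.Subgraph, H.verts.Nonempty → 2 * (H.edgeSet.ncard : ℝ) < x * H.verts.ncard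

/-!
Write `k = d + 2`. A weighted request is satisfied to the extent `ε` as soon as some random
`L`-coloring gives every vertex each of its colors with probability at least `ε`. Such a random
coloring is built up along reducible pieces: if the rest of the graph is already colored at random,
one extends uniformly at random over a set `H` of at most `b` vertices, so that every possible
extension has probability at least `k ^ (-b)`. The invariant that survives is not only that each
single color is likely, but also that any `k - 2` vertices avoid a given color with positive
probability; the latter lets a vertex of `H`, which has at most `k - 2` neighbors outside `H`,
receive any prescribed color.

A graph of small maximum average degree has a reducible piece by discharging: if all degrees are at
least `d + 1`, and no vertex of degree `d + 1` has `d` neighbors of degree `d + 1`, let every vertex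
of larger degree send `1 / (d + 4)` to each of its neighbors of degree `d + 1`. A vertex of degree
`d + 1` with `d` such neighbors spans, together with them, a connected subgraph on `d + 1` vertices
of degree `d + 1`, which is reducible.

For `d = 0` the avoidance property is void, but then `G` is a forest: it has two `L`-colorings that
together use both colors of every list, and one of them satisfies half of the request.
-/

open Finset MeasureTheory
open scoped ENNReal

section

variable {V α : Type*} {G : SimpleGraph V} {A B H T : Finset V}

/-- The neighbors of `v` that lie in `A`. -/
noncomputable def neighborsIn (G : SimpleGraph V) (A : Finset V) (v : V) : Finset V :=
  open scoped Classical in {u ∈ A | G.Adj v u}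

lemma mem_neighborsIn {u v : V} : u ∈ neighborsIn G A v ↔ u ∈ A ∧ G.Adj v u := by
  simp [neighborsIn]

lemma neighborsIn_mono (h : A ⊆ B) (v : V) : neighborsIn G A v ⊆ neighborsIn G B v := fun _ hu =>
  mem_neighborsIn.2 ((mem_neighborsIn.1 hu).imp_left (@h _))

/-- The number of neighbors of `v` in `A`; for `v ∈ A` this is the degree of `v` in `G[A]`. -/
noncomputable def degIn (G : SimpleGraph V) (A : Finset V) (v : V) : ℕ :=
  #(neighborsIn G A v)

lemma degIn_mono (h : A ⊆ B) (v : V) : degIn G A v ≤ degIn G B v :=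
  card_le_card (neighborsIn_mono h v)

lemma degIn_lt_degIn (h : A ⊆ B) {v w : V} (hwB : w ∈ B) (hwA : w ∉ A) (hvw : G.Adj v w) :
    degIn G A v < degIn G B v :=
  card_lt_card <| (ssubset_iff_of_subset (neighborsIn_mono h v)).2
    ⟨w, mem_neighborsIn.2 ⟨hwB, hvw⟩, fun hw => hwA (mem_neighborsIn.1 hw).1⟩

lemma degIn_singleton_self (v : V) : degIn G {v} v = 0 := by
  simp [degIn, neighborsIn, filter_singleton]

lemma sum_degIn_comm (G : SimpleGraph V) (A B : Finset V) :
    ∑ v ∈ A, degIn G B v = ∑ u ∈ B, degIn G A u := by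
  classical
  simpa only [degIn, neighborsIn, bipartiteAbove, bipartiteBelow, G.adj_comm] using
    sum_card_bipartiteAbove_eq_sum_card_bipartiteBelow (s := A) (t := B) G.Adj

lemma MadLT.sum_degIn_lt [Finite V] {x : ℝ} (hG : MadLT G x) (hA : A.Nonempty) :
    ((∑ v ∈ A, degIn G A v : ℕ) : ℝ) < x * #A := by
  classical
  have := Fintype.ofFinite V
  let K : G.Subgraph := (⊤ : G.Subgraph).induce A
  have hdeg (v : V) : K.spanningCoe.degree v = if v ∈ A then degIn G A v else 0 := by
    rw [← SimpleGraph.card_neighborFinset_eq_degree]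
    split_ifs with hv
    · exact congrArg card (by ext; simp [K, hv, mem_neighborsIn])
    · exact card_eq_zero.2 (by ext; simp [K, hv])
  have hedges : #K.spanningCoe.edgeFinset = K.edgeSet.ncard := by
    rw [← Set.ncard_coe_finset, SimpleGraph.coe_edgeFinset,
      SimpleGraph.Subgraph.edgeSet_spanningCoe]
  have hsum : ∑ v ∈ A, degIn G A v = 2 * K.edgeSet.ncard := by
    rw [← hedges, ← K.spanningCoe.sum_degrees_eq_twice_card_edges]
    simp only [hdeg, sum_ite_mem, univ_inter]
  simpa [hsum, K, Set.ncard_coe_finset] using hG K (by simpa [K] using hA)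

lemma MadLT.exists_degIn_lt [Finite V] {n : ℕ} (hG : MadLT G n) (hA : A.Nonempty) :
    ∃ v ∈ A, degIn G A v < n := by
  have hsum : ∑ v ∈ A, degIn G A v < ∑ _v ∈ A, n := by
    rw [sum_const, smul_eq_mul, mul_comm]
    exact_mod_cast hG.sum_degIn_lt hA
  exact exists_lt_of_sum_lt hsum

lemma MadLT.mono {x y : ℝ} (hG : MadLT G x) (hxy : x ≤ y) : MadLT G y := fun K hK =>
  (hG K hK).trans_le (by gcongr)

lemma exists_adj_notMem_of_connected_induce (hH : (G.induce (H : Set V)).Connected)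
    (hTH : T ⊂ H) (hT : T.Nonempty) : ∃ u ∈ T, ∃ w ∈ H, w ∉ T ∧ G.Adj u w := by
  obtain ⟨u, hu⟩ := hT
  obtain ⟨w, hwH, hwT⟩ := exists_of_ssubset hTH
  obtain ⟨p⟩ := hH.preconnected ⟨u, hTH.1 hu⟩ ⟨w, hwH⟩
  obtain ⟨e, -, hfst, hsnd⟩ := p.exists_boundary_dart {x | x.1 ∈ T} hu hwT
  exact ⟨e.fst, hfst, e.snd, e.snd.2, hsnd, e.adj⟩

/-- `φ` is a proper coloring of the induced subgraph `G[A]`; its values outside `A` are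
unconstrained. -/
def IsProperOn (G : SimpleGraph V) (A : Finset V) (φ : V → α) : Prop :=
  ∀ ⦃u⦄, u ∈ A → ∀ ⦃w⦄, w ∈ A → G.Adj u w → φ u ≠ φ w

lemma isProperOn_empty (φ : V → α) : IsProperOn G ∅ φ := by
  simp [IsProperOn]

lemma IsProperOn.congr {φ ψ : V → α} (hφ : IsProperOn G A φ) (h : ∀ u ∈ A, ψ u = φ u) :
    IsProperOn G A ψ := fun u hu w hw huw => by
  rw [h u hu, h w hw]
  exact hφ hu hw huw

/-- `f`-choosability of the induced subgraph `G[H]`: it can be colored from any lists that give each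
`u ∈ H` at least `f u` colors. -/
def IsChoosableOn (G : SimpleGraph V) (H : Finset V) (f : V → ℕ) : Prop :=
  ∀ M : V → Finset ℕ, (∀ u ∈ H, f u ≤ #(M u)) → ∃ ψ, (∀ u ∈ H, ψ u ∈ M u) ∧ IsProperOn G H ψ

lemma IsChoosableOn.pos {f : V → ℕ} (h : IsChoosableOn G H f) {v : V} (hv : v ∈ H) : 0 < f v := by
  obtain ⟨ψ, hψ, -⟩ := h (fun u => range (f u)) (by simp)
  exact (Nat.zero_le _).trans_lt (mem_range.1 (hψ v hv))

lemma degIn_sdiff_add_degIn [DecidableEq V] (h : A ⊆ B) (v : V) :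
    degIn G (B \ A) v + degIn G A v = degIn G B v := by
  classical
  simp only [degIn, neighborsIn]
  rw [← card_union_of_disjoint (disjoint_filter_filter sdiff_disjoint), ← filter_union,
    sdiff_union_of_subset h]

lemma card_mul_le_sum_degIn {d : ℕ} (hmin : ∀ v ∈ A, d + 1 ≤ degIn G A v)
    (hlow : ∀ v ∈ A, degIn G A v = d + 1 → degIn G {u ∈ A | degIn G A u = d + 1} v < d) :
    #A * ((d + 2) * (d + 3)) ≤ (d + 4) * ∑ v ∈ A, degIn G A v := by
  classical
  set B := {u ∈ A | degIn G A u = d + 1}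
  have hBA : B ⊆ A := filter_subset _ _
  -- Each vertex ends with charge at least `(d + 2) * (d + 3) / (d + 4)`; all charges are scaled by
  -- `d + 4` to stay in `ℕ`.
  have hhigh_vertex (v) (hv : v ∈ A \ B) :
      (d + 2) * (d + 3) + degIn G B v ≤ (d + 4) * degIn G A v := by
    obtain ⟨hvA, hvB⟩ := mem_sdiff.1 hv
    have hne : degIn G A v ≠ d + 1 := fun h => hvB (mem_filter.2 ⟨hvA, h⟩)
    have hdeg : d + 2 ≤ degIn G A v := by have := hmin v hvA; lia
    have := degIn_mono (G := G) hBA v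
    nlinarith
  have hlow_vertex (v) (hv : v ∈ B) :
      (d + 2) * (d + 3) ≤ (d + 4) * degIn G A v + degIn G (A \ B) v := by
    obtain ⟨hvA, hdeg⟩ := mem_filter.1 hv
    have hlt := hlow v hvA hdeg
    have hadd := degIn_sdiff_add_degIn (G := G) hBA v
    rw [hdeg] at hadd ⊢
    have : 2 ≤ degIn G (A \ B) v := by lia
    nlinarith
  have hhigh := sum_le_sum hhigh_vertex
  have hlow := sum_le_sum hlow_vertex
  simp only [sum_add_distrib, sum_const, smul_eq_mul, ← mul_sum] at hhigh hlow
  rw [sum_degIn_comm G (A \ B) B] at hhigh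
  rw [← sum_sdiff hBA, ← card_sdiff_add_card_eq_card hBA]
  linarith

lemma connected_induce_insert_of_forall_adj [DecidableEq V] {v : V} {N : Finset V}
    (hN : ∀ w ∈ N, G.Adj v w) :
    (G.induce ((insert v N : Finset V) : Set V)).Connected := by
  refine SimpleGraph.connected_iff_exists_forall_reachable _ |>.2
    ⟨⟨v, mem_insert_self v N⟩, fun ⟨w, hw⟩ => ?_⟩
  rcases mem_insert.1 hw with rfl | hwN
  · rfl
  · exact SimpleGraph.Adj.reachable (hN w hwN)

lemma IsProperOn.of_sdiff [DecidableEq V] {φ : V → α} (hH : IsProperOn G H φ)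
    (hAH : IsProperOn G (A \ H) φ) (hcross : ∀ u ∈ H, ∀ w ∈ A \ H, G.Adj u w → φ u ≠ φ w) :
    IsProperOn G A φ := by
  intro u hu w hw huw
  by_cases huH : u ∈ H <;> by_cases hwH : w ∈ H
  · exact hH huH hwH huw
  · exact hcross u huH w (mem_sdiff.2 ⟨hw, hwH⟩) huw
  · exact (hcross w hwH u (mem_sdiff.2 ⟨hu, huH⟩) huw.symm).symm
  · exact hAH (mem_sdiff.2 ⟨hu, huH⟩) (mem_sdiff.2 ⟨hw, hwH⟩) huw

lemma IsProperOn.update [DecidableEq V] {φ : V → α} {v : V} {c : α}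
    (hφ : IsProperOn G (A.erase v) φ) (hc : ∀ u ∈ A, G.Adj v u → φ u ≠ c) :
    IsProperOn G A (Function.update φ v c) := by
  have hoff : ∀ u ∈ A \ {v}, Function.update φ v c u = φ u := fun u hu =>
    Function.update_of_ne (by simpa using (mem_sdiff.1 hu).2) _ _
  refine IsProperOn.of_sdiff (H := {v}) ?_ ?_ ?_
  · simp [IsProperOn]
  · rw [erase_eq] at hφ
    exact hφ.congr hoff
  · intro u hu w hw huw
    obtain rfl := mem_singleton.1 hu
    rw [hoff w hw, Function.update_self]
    exact (hc w (mem_sdiff.1 hw).1 huw).symm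

lemma isChoosableOn_of_forall_exists_degIn_lt {f : V → ℕ}
    (h : ∀ T ⊆ H, T.Nonempty → ∃ u ∈ T, degIn G T u < f u) : IsChoosableOn G H f := by
  classical
  intro M hM
  induction H using Finset.strongInduction with
  | H H ih =>
    rcases H.eq_empty_or_nonempty with rfl | hH
    · exact ⟨fun _ => 0, by simp, isProperOn_empty _⟩
    obtain ⟨u, huH, hu⟩ := h H subset_rfl hH
    obtain ⟨ψ, hψM, hψ⟩ := ih (H.erase u) (erase_ssubset huH)
      (fun T hT => h T (hT.trans (erase_subset _ _))) (fun w hw => hM w (mem_of_mem_erase hw))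
    obtain ⟨c, hcM, hc⟩ : ∃ c ∈ M u, c ∉ (neighborsIn G H u).image ψ :=
      exists_mem_notMem_of_card_lt_card (card_image_le.trans_lt (hu.trans_le (hM u huH)))
    refine ⟨Function.update ψ u c, fun w hw => ?_, hψ.update fun w hw huw hwc =>
      hc (mem_image.2 ⟨w, mem_neighborsIn.2 ⟨hw, huw⟩, hwc⟩)⟩
    rcases eq_or_ne w u with rfl | hwu
    · rwa [Function.update_self]
    · rw [Function.update_of_ne hwu]
      exact hψM w (mem_erase.2 ⟨hwu, hw⟩)

/-- `G[H]` is a `(k, b)`-reducible induced subgraph of `G[A]`. If `G[A \ H]` is colored from lists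
of size `k`, then `k - degIn G (A \ H) u` colors are certain to remain for `u ∈ H`; the conditions
`fix` and `forb` ask that `G[H]` can be colored from what remains even after a color is prescribed
at one vertex, respectively forbidden at `k - 2` vertices. -/
structure IsReducible [DecidableEq V] (k b : ℕ) (G : SimpleGraph V) (A H : Finset V) : Prop where
  subset : H ⊆ A
  nonempty : H.Nonempty
  card_le : #H ≤ b
  fix : ∀ v ∈ H, IsChoosableOn G H (Function.update (fun u => k - degIn G (A \ H) u) v 1)
  forb : ∀ I : Finset V, #I + 2 ≤ k →
    IsChoosableOn G H fun u => k - degIn G (A \ H) u - if u ∈ I then 1 else 0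

section Reducible

variable [DecidableEq V] {k b d : ℕ}

lemma IsReducible.degIn_sdiff_add_two_le (hk : 3 ≤ k) (hH : IsReducible k b G A H) {v : V}
    (hv : v ∈ H) : degIn G (A \ H) v + 2 ≤ k := by
  have := (hH.forb {v} (by simpa using hk)).pos hv
  simp only [mem_singleton, if_true] at this
  lia

lemma isChoosableOn_update_one (hHA : H ⊆ A) (hdeg : ∀ u ∈ H, degIn G A u < k) (v : V) :
    IsChoosableOn G H (Function.update (fun u => k - degIn G (A \ H) u) v 1) := by
  refine isChoosableOn_of_forall_exists_degIn_lt fun T hT hne => ?_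
  by_cases hTv : T = {v}
  · exact ⟨v, by simp [hTv], by simp [hTv, degIn_singleton_self]⟩
  · obtain ⟨u, hu, huv⟩ : ∃ u ∈ T, u ≠ v := by
      by_contra! hcon
      exact hTv (eq_singleton_iff_nonempty_unique_mem.2 ⟨hne, hcon⟩)
    refine ⟨u, hu, ?_⟩
    rw [Function.update_of_ne huv]
    have := degIn_mono (G := G) hT u
    have := degIn_sdiff_add_degIn (G := G) hHA u
    have := hdeg u (hT hu)
    lia

lemma isReducible_singleton {v : V} (hb : 1 ≤ b) (hv : v ∈ A) (hdeg : degIn G A v + 2 ≤ k) :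
    IsReducible k b G A {v} where
  subset := singleton_subset_iff.2 hv
  nonempty := singleton_nonempty v
  card_le := by simpa using hb
  fix v' _ := isChoosableOn_update_one (singleton_subset_iff.2 hv) (by simp; lia) v'
  forb I _ := by
    refine isChoosableOn_of_forall_exists_degIn_lt fun T hT hne => ⟨v, ?_, ?_⟩
    · simp [hne.subset_singleton_iff.1 hT]
    · rw [hne.subset_singleton_iff.1 hT, degIn_singleton_self]
      have := degIn_mono (G := G) (sdiff_subset (s := A) (t := {v})) v
      split_ifs <;> lia

lemma isReducible_of_connected (hHA : H ⊆ A) (hH : (G.induce (H : Set V)).Connected)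
    (hcard : #H + 1 = k) (hHb : #H ≤ b) (hdeg : ∀ u ∈ H, degIn G A u + 1 = k) :
    IsReducible k b G A H where
  subset := hHA
  nonempty := have ⟨u⟩ := hH.nonempty; ⟨u, u.2⟩
  card_le := hHb
  fix v _ := isChoosableOn_update_one hHA (fun u hu => by have := hdeg u hu; lia) v
  forb I hI := by
    refine isChoosableOn_of_forall_exists_degIn_lt fun T hT hne => ?_
    have hout (u) (hu : u ∈ T) : degIn G (A \ H) u + degIn G H u + 1 = k := by
      rw [degIn_sdiff_add_degIn hHA, hdeg u (hT hu)]
    by_cases hTI : T ⊆ I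
    · have hTH : T ⊂ H := hT.ssubset_of_ne fun h => by
        have := card_le_card hTI
        rw [h] at this
        lia
      obtain ⟨u, hu, w, hwH, hwT, huw⟩ := exists_adj_notMem_of_connected_induce hH hTH hne
      refine ⟨u, hu, ?_⟩
      have := degIn_lt_degIn hT hwH hwT huw
      have := hout u hu
      split_ifs <;> lia
    · obtain ⟨u, hu, huI⟩ := not_subset.1 hTI
      refine ⟨u, hu, ?_⟩
      have := degIn_mono (G := G) hT u
      have := hout u hu
      rw [if_neg huI]
      lia

lemma MadLT.exists_isReducible [Finite V] (hG : MadLT G (d + 1 + 2 / (d + 4)))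
    (hA : A.Nonempty) : ∃ H, IsReducible (d + 2) (d + 1) G A H := by
  by_cases hsmall : ∃ v ∈ A, degIn G A v ≤ d
  · obtain ⟨v, hv, hvd⟩ := hsmall
    exact ⟨{v}, isReducible_singleton (by lia) hv (by lia)⟩
  by_cases hstar : ∃ v ∈ A, degIn G A v = d + 1 ∧ d ≤ degIn G {u ∈ A | degIn G A u = d + 1} v
  · obtain ⟨v, hv, hvd, hle⟩ := hstar
    obtain ⟨N, hN, hcardN⟩ := exists_subset_card_eq hle
    simp only [subset_iff, mem_neighborsIn, mem_filter] at hN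
    have hcard : #(insert v N) = d + 1 := by
      rw [card_insert_of_notMem fun hvN => (hN hvN).2.ne rfl, hcardN]
    refine ⟨insert v N, isReducible_of_connected ?_
      (connected_induce_insert_of_forall_adj fun w hw => (hN hw).2) (by rw [hcard]) hcard.le ?_⟩
    · exact insert_subset hv fun w hw => (hN hw).1.1
    · simp only [mem_insert, forall_eq_or_imp]
      exact ⟨by rw [hvd], fun w hw => by rw [(hN hw).1.2]⟩
  push Not at hsmall hstar
  have hdischarge : (#A : ℝ) * ((d + 2) * (d + 3)) ≤ (d + 4) * (∑ v ∈ A, degIn G A v : ℕ) := by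
    exact_mod_cast card_mul_le_sum_degIn hsmall hstar
  have hmad : (d + 4 : ℝ) * (∑ v ∈ A, degIn G A v : ℕ) < #A * ((d + 2) * (d + 3)) := by
    calc (d + 4 : ℝ) * (∑ v ∈ A, degIn G A v : ℕ)
        < (d + 4) * ((d + 1 + 2 / (d + 4)) * #A) := by gcongr; exact hG.sum_degIn_lt hA
      _ = #A * ((d + 2) * (d + 3)) := by field_simp; ring
  exact absurd hdischarge hmad.not_ge

end Reducible

section Extension

variable {L : V → Finset ℕ} {φ ψ : V → ℕ} {k b : ℕ}

/-- An assignment of colors from the lists to all vertices that is proper on `A`. Vertices outside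
`A` carry an arbitrary color of their list, so that every partial coloring is a function on `V`. -/
def IsLColoringOn (G : SimpleGraph V) (L : V → Finset ℕ) (A : Finset V) (φ : V → ℕ) : Prop :=
  (∀ v, φ v ∈ L v) ∧ IsProperOn G A φ

/-- The colors of `L u` that `φ` does not use on the neighbors of `u` in `A`. -/
noncomputable def freeColors (G : SimpleGraph V) (L : V → Finset ℕ) (A : Finset V) (φ : V → ℕ)
    (u : V) : Finset ℕ :=
  L u \ (neighborsIn G A u).image φ

lemma mem_freeColors {u : V} {c : ℕ} :
    c ∈ freeColors G L A φ u ↔ c ∈ L u ∧ ∀ w ∈ A, G.Adj u w → φ w ≠ c := by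
  simp [freeColors, mem_neighborsIn]

lemma card_sub_degIn_le_card_freeColors (u : V) :
    #(L u) - degIn G A u ≤ #(freeColors G L A φ u) :=
  (Nat.sub_le_sub_left card_image_le _).trans (le_card_sdiff _ _)

variable [Fintype V] [DecidableEq V]

/-- The recolorings of `H` that turn `φ` into an `L`-coloring of `G[A]`. -/
noncomputable def colorExtensions (G : SimpleGraph V) (L : V → Finset ℕ) (A H : Finset V)
    (φ : V → ℕ) : Finset (V → ℕ) :=
  open scoped Classical in {ψ ∈ Fintype.piFinset L | (∀ u ∉ H, ψ u = φ u) ∧ IsProperOn G A ψ}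

lemma mem_colorExtensions :
    ψ ∈ colorExtensions G L A H φ ↔ IsLColoringOn G L A ψ ∧ ∀ u ∉ H, ψ u = φ u := by
  simp only [colorExtensions, mem_filter, Fintype.mem_piFinset, IsLColoringOn]
  tauto

lemma card_colorExtensions_le_prod : #(colorExtensions G L A H φ) ≤ ∏ v ∈ H, #(L v) := by
  have hsub : colorExtensions G L A H φ ⊆
      Fintype.piFinset fun v => if v ∈ H then L v else {φ v} := fun ψ hψ => by
    obtain ⟨hψL, hψφ⟩ := mem_colorExtensions.1 hψ
    refine Fintype.mem_piFinset.2 fun v => ?_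
    split_ifs with hv
    · exact hψL.1 v
    · exact mem_singleton.2 (hψφ v hv)
  refine (card_le_card hsub).trans_eq ?_
  simp only [Fintype.card_piFinset, apply_ite card, card_singleton, prod_ite_mem, univ_inter]

lemma card_colorExtensions_le_pow (hk : 1 ≤ k) (hL : ∀ v, #(L v) ≤ k) (hb : #H ≤ b) :
    #(colorExtensions G L A H φ) ≤ k ^ b :=
  card_colorExtensions_le_prod.trans <|
    (prod_le_pow_card _ _ _ fun v _ => hL v).trans (Nat.pow_le_pow_right hk hb)

lemma IsChoosableOn.exists_mem_colorExtensions {f : V → ℕ} (hH : IsChoosableOn G H f)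
    (hφ : IsLColoringOn G L (A \ H) φ) {M : V → Finset ℕ}
    (hM : ∀ u ∈ H, M u ⊆ freeColors G L (A \ H) φ u) (hf : ∀ u ∈ H, f u ≤ #(M u)) :
    ∃ ψ ∈ colorExtensions G L A H φ, ∀ u ∈ H, ψ u ∈ M u := by
  obtain ⟨ψ, hψM, hψ⟩ := hH M hf
  have hon : ∀ u ∈ H, H.piecewise ψ φ u = ψ u := fun u hu => piecewise_eq_of_mem _ _ _ hu
  have hoff : ∀ u ∉ H, H.piecewise ψ φ u = φ u := fun u hu => piecewise_eq_of_notMem _ _ _ hu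
  have hfree : ∀ u ∈ H, ψ u ∈ freeColors G L (A \ H) φ u := fun u hu => hM u hu (hψM u hu)
  refine ⟨H.piecewise ψ φ, mem_colorExtensions.2 ⟨⟨fun v => ?_, ?_⟩, hoff⟩, fun u hu => ?_⟩
  · by_cases hv : v ∈ H
    · rw [hon v hv]
      exact (mem_freeColors.1 (hfree v hv)).1
    · rw [hoff v hv]
      exact hφ.1 v
  · refine (hψ.congr hon).of_sdiff (hφ.2.congr fun u hu => hoff u (mem_sdiff.1 hu).2) ?_
    intro u hu w hw huw
    rw [hon u hu, hoff w (mem_sdiff.1 hw).2]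
    exact ((mem_freeColors.1 (hfree u hu)).2 w hw huw).symm
  · rw [hon u hu]
    exact hψM u hu

variable (hL : ∀ v, k ≤ #(L v)) (hH : IsReducible k b G A H) (hφ : IsLColoringOn G L (A \ H) φ)

include hL hH hφ

lemma IsReducible.exists_mem_colorExtensions_eq {v : V} (hv : v ∈ H) {c : ℕ}
    (hc : c ∈ freeColors G L (A \ H) φ v) : ∃ ψ ∈ colorExtensions G L A H φ, ψ v = c := by
  obtain ⟨ψ, hψ, hψM⟩ := (hH.fix v hv).exists_mem_colorExtensions hφ
    (M := Function.update (freeColors G L (A \ H) φ) v {c})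
    (fun u _ => by
      rcases eq_or_ne u v with rfl | huv
      · simpa using hc
      · rw [Function.update_of_ne huv])
    (fun u _ => by
      rcases eq_or_ne u v with rfl | huv
      · simp
      · rw [Function.update_of_ne huv, Function.update_of_ne huv]
        exact (Nat.sub_le_sub_right (hL u) _).trans (card_sub_degIn_le_card_freeColors u))
  exact ⟨ψ, hψ, by simpa using hψM v hv⟩

lemma IsReducible.exists_mem_colorExtensions_ne {I : Finset V} (hI : #I + 2 ≤ k) (c : ℕ) :
    ∃ ψ ∈ colorExtensions G L A H φ, ∀ u ∈ H, u ∈ I → ψ u ≠ c := by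
  obtain ⟨ψ, hψ, hψM⟩ := (hH.forb I hI).exists_mem_colorExtensions hφ
    (M := fun u => freeColors G L (A \ H) φ u \ if u ∈ I then {c} else ∅)
    (fun u _ => sdiff_subset)
    (fun u _ => by
      have hcard : #(if u ∈ I then {c} else ∅ : Finset ℕ) = if u ∈ I then 1 else 0 := by
        split_ifs <;> rfl
      rw [← hcard]
      exact (Nat.sub_le_sub_right ((Nat.sub_le_sub_right (hL u) _).trans
        (card_sub_degIn_le_card_freeColors u)) _).trans (le_card_sdiff _ _))
  refine ⟨ψ, hψ, fun u hu huI => ?_⟩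
  have := hψM u hu
  rw [if_pos huI, mem_sdiff, mem_singleton] at this
  exact this.2

lemma IsReducible.colorExtensions_nonempty (hk : 2 ≤ k) : (colorExtensions G L A H φ).Nonempty :=
  have ⟨ψ, hψ, _⟩ := hH.exists_mem_colorExtensions_ne hL hφ (I := ∅) (by simpa using hk) 0
  ⟨ψ, hψ⟩

end Extension

lemma mul_toOuterMeasure_le_toOuterMeasure_bind {β : Type*} {p : PMF α} {q : α → PMF β}
    {Y : Set α} {X : Set β} {r : ℝ≥0∞}
    (h : ∀ a ∈ p.support, a ∈ Y → r ≤ (q a).toOuterMeasure X) :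
    r * p.toOuterMeasure Y ≤ (p.bind q).toOuterMeasure X := by
  rw [PMF.toOuterMeasure_apply, PMF.toOuterMeasure_bind_apply, ← ENNReal.tsum_mul_left]
  refine ENNReal.tsum_le_tsum fun a => ?_
  by_cases haY : a ∈ Y
  · rw [Set.indicator_of_mem haY, mul_comm]
    by_cases ha : a ∈ p.support
    · gcongr
      exact h a ha haY
    · simp [(p.apply_eq_zero_iff a).2 ha]
  · simp [haY]

section RandomColoring

variable {L : V → Finset ℕ} {φ ψ : V → ℕ} {k b : ℕ} {p : PMF (V → ℕ)} {X Y : Set (V → ℕ)}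

/-- The distribution `p` of a random `L`-coloring of `G[A]` is spread out: every vertex of `A`
receives each of its colors with probability at least `δ ^ (k - 1)`, and any set `I` of at most
`k - 2` vertices avoids a given color with probability at least `δ ^ #I`. -/
structure IsSpread (k : ℕ) (δ : ℝ≥0∞) (G : SimpleGraph V) (L : V → Finset ℕ) (A : Finset V)
    (p : PMF (V → ℕ)) : Prop where
  isLColoringOn : ∀ φ ∈ p.support, IsLColoringOn G L A φ
  fix : ∀ v ∈ A, ∀ c ∈ L v, δ ^ (k - 1) ≤ p.toOuterMeasure {φ | φ v = c}
  forb : ∀ I ⊆ A, #I + 2 ≤ k → ∀ c, δ ^ #I ≤ p.toOuterMeasure {φ | ∀ u ∈ I, φ u ≠ c}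

lemma isSpread_pure {δ : ℝ≥0∞} (hφ : ∀ v, φ v ∈ L v) : IsSpread k δ G L ∅ (PMF.pure φ) where
  isLColoringOn ψ hψ := by
    obtain rfl := (PMF.mem_support_pure_iff _ _).1 hψ
    exact ⟨hφ, isProperOn_empty _⟩
  fix := by simp
  forb I hI _ c := by
    obtain rfl := subset_empty.1 hI
    simp

lemma inv_natCast_pow_le_one (hk : 1 ≤ k) : ((k : ℝ≥0∞) ^ b)⁻¹ ≤ 1 :=
  ENNReal.inv_le_one.2 (one_le_pow₀ (by exact_mod_cast hk))

section RandomExtension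

variable [Fintype V] [DecidableEq V]

/-- A uniformly random element of `colorExtensions G L A H φ`; it is concentrated on `φ` in the
degenerate case that there is no extension. -/
noncomputable def randomExtension (G : SimpleGraph V) (L : V → Finset ℕ) (A H : Finset V)
    (φ : V → ℕ) : PMF (V → ℕ) :=
  if h : (colorExtensions G L A H φ).Nonempty then PMF.uniformOfFinset _ h else PMF.pure φ

lemma support_randomExtension (h : (colorExtensions G L A H φ).Nonempty) :
    (randomExtension G L A H φ).support = colorExtensions G L A H φ := by
  rw [randomExtension, dif_pos h, PMF.support_uniformOfFinset]

lemma inv_pow_le_toOuterMeasure_randomExtension (hk : 1 ≤ k) (hL : ∀ v, #(L v) ≤ k) (hb : #H ≤ b)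
    (hψ : ψ ∈ colorExtensions G L A H φ) (hψX : ψ ∈ X) :
    ((k : ℝ≥0∞) ^ b)⁻¹ ≤ (randomExtension G L A H φ).toOuterMeasure X := by
  calc ((k : ℝ≥0∞) ^ b)⁻¹
      ≤ (#(colorExtensions G L A H φ) : ℝ≥0∞)⁻¹ := by
        gcongr
        exact_mod_cast card_colorExtensions_le_pow hk hL hb
    _ = (randomExtension G L A H φ).toOuterMeasure {ψ} := by
        have hne : (colorExtensions G L A H φ).Nonempty := ⟨ψ, hψ⟩
        rw [PMF.toOuterMeasure_apply_singleton, randomExtension, dif_pos hne,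
          PMF.uniformOfFinset_apply_of_mem _ hψ]
    _ ≤ (randomExtension G L A H φ).toOuterMeasure X :=
        measure_mono (Set.singleton_subset_iff.2 hψX)

lemma toOuterMeasure_le_bind_randomExtension
    (hne : ∀ φ ∈ p.support, (colorExtensions G L A H φ).Nonempty)
    (hYX : ∀ φ ∈ Y, ∀ ψ, (∀ u ∉ H, ψ u = φ u) → ψ ∈ X) :
    p.toOuterMeasure Y ≤ (p.bind (randomExtension G L A H)).toOuterMeasure X := by
  rw [← one_mul (p.toOuterMeasure Y)]
  refine mul_toOuterMeasure_le_toOuterMeasure_bind fun φ hφ hφY => ?_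
  refine ((PMF.toOuterMeasure_apply_eq_one_iff _ _).2 ?_).ge
  rw [support_randomExtension (hne φ hφ)]
  exact fun ψ hψ => hYX φ hφY ψ (mem_colorExtensions.1 hψ).2

lemma inv_pow_mul_toOuterMeasure_le_bind_randomExtension (hk : 1 ≤ k) (hL : ∀ v, #(L v) ≤ k)
    (hb : #H ≤ b) (hYX : ∀ φ ∈ p.support, φ ∈ Y → ∃ ψ ∈ colorExtensions G L A H φ, ψ ∈ X) :
    ((k : ℝ≥0∞) ^ b)⁻¹ * p.toOuterMeasure Y ≤
      (p.bind (randomExtension G L A H)).toOuterMeasure X :=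
  mul_toOuterMeasure_le_toOuterMeasure_bind fun φ hφ hφY =>
    have ⟨_, hψ, hψX⟩ := hYX φ hφ hφY
    inv_pow_le_toOuterMeasure_randomExtension hk hL hb hψ hψX

section Step

variable (hk : 3 ≤ k) (hL : ∀ v, #(L v) = k) (hH : IsReducible k b G A H)
  (hp : IsSpread k ((k : ℝ≥0∞) ^ b)⁻¹ G L (A \ H) p)

include hk hL hH hp

lemma IsSpread.colorExtensions_nonempty (hφ : φ ∈ p.support) :
    (colorExtensions G L A H φ).Nonempty :=
  hH.colorExtensions_nonempty (fun v => (hL v).ge) (hp.isLColoringOn φ hφ) (by lia)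

lemma IsSpread.fix_bind_randomExtension {v : V} (hv : v ∈ A) {c : ℕ} (hc : c ∈ L v) :
    ((k : ℝ≥0∞) ^ b)⁻¹ ^ (k - 1) ≤
      (p.bind (randomExtension G L A H)).toOuterMeasure {φ | φ v = c} := by
  by_cases hvH : v ∈ H
  · set N := neighborsIn G (A \ H) v
    have hN : #N + 2 ≤ k := hH.degIn_sdiff_add_two_le hk hvH
    calc ((k : ℝ≥0∞) ^ b)⁻¹ ^ (k - 1)
        ≤ ((k : ℝ≥0∞) ^ b)⁻¹ ^ (#N + 1) :=
          pow_le_pow_right_of_le_one' (inv_natCast_pow_le_one (by lia)) (by lia)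
      _ = ((k : ℝ≥0∞) ^ b)⁻¹ * ((k : ℝ≥0∞) ^ b)⁻¹ ^ #N := pow_succ' _ _
      _ ≤ ((k : ℝ≥0∞) ^ b)⁻¹ * p.toOuterMeasure {φ | ∀ u ∈ N, φ u ≠ c} := by
          gcongr
          exact hp.forb N (fun u hu => (mem_neighborsIn.1 hu).1) hN c
      _ ≤ (p.bind (randomExtension G L A H)).toOuterMeasure {φ | φ v = c} :=
          inv_pow_mul_toOuterMeasure_le_bind_randomExtension (by lia) (fun v => (hL v).le)
            hH.card_le fun φ hφ hφN =>
              hH.exists_mem_colorExtensions_eq (fun v => (hL v).ge) (hp.isLColoringOn φ hφ) hvH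
                (mem_freeColors.2 ⟨hc, fun w hw hvw => hφN w (mem_neighborsIn.2 ⟨hw, hvw⟩)⟩)
  · refine (hp.fix v (mem_sdiff.2 ⟨hv, hvH⟩) c hc).trans <|
      toOuterMeasure_le_bind_randomExtension (fun φ => hp.colorExtensions_nonempty hk hL hH) ?_
    exact fun φ hφ ψ hψ => (hψ v hvH).trans hφ

lemma IsSpread.forb_bind_randomExtension {I : Finset V} (hIA : I ⊆ A) (hI : #I + 2 ≤ k) (c : ℕ) :
    ((k : ℝ≥0∞) ^ b)⁻¹ ^ #I ≤
      (p.bind (randomExtension G L A H)).toOuterMeasure {φ | ∀ u ∈ I, φ u ≠ c} := by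
  have hcard : #(I \ H) ≤ #I := card_le_card sdiff_subset
  have hforb := hp.forb (I \ H) (sdiff_subset_sdiff hIA subset_rfl) (by lia) c
  by_cases hIH : Disjoint I H
  · rw [sdiff_eq_self_of_disjoint hIH] at hforb
    refine hforb.trans <|
      toOuterMeasure_le_bind_randomExtension (fun φ => hp.colorExtensions_nonempty hk hL hH) ?_
    intro φ hφ ψ hψ u hu
    rw [hψ u (disjoint_left.1 hIH hu)]
    exact hφ u hu
  · have hlt : #(I \ H) < #I :=
      card_lt_card (sdiff_subset.ssubset_of_ne fun h => hIH (sdiff_eq_self_iff_disjoint.1 h))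
    calc ((k : ℝ≥0∞) ^ b)⁻¹ ^ #I
        ≤ ((k : ℝ≥0∞) ^ b)⁻¹ ^ (#(I \ H) + 1) :=
          pow_le_pow_right_of_le_one' (inv_natCast_pow_le_one (by lia)) hlt
      _ = ((k : ℝ≥0∞) ^ b)⁻¹ * ((k : ℝ≥0∞) ^ b)⁻¹ ^ #(I \ H) := pow_succ' _ _
      _ ≤ ((k : ℝ≥0∞) ^ b)⁻¹ * p.toOuterMeasure {φ | ∀ u ∈ I \ H, φ u ≠ c} := by gcongr
      _ ≤ (p.bind (randomExtension G L A H)).toOuterMeasure {φ | ∀ u ∈ I, φ u ≠ c} := by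
          refine inv_pow_mul_toOuterMeasure_le_bind_randomExtension (by lia) (fun v => (hL v).le)
            hH.card_le fun φ hφ hφI => ?_
          obtain ⟨ψ, hψ, hψI⟩ := hH.exists_mem_colorExtensions_ne (fun v => (hL v).ge)
            (hp.isLColoringOn φ hφ) hI c
          refine ⟨ψ, hψ, fun u hu => ?_⟩
          by_cases huH : u ∈ H
          · exact hψI u huH hu
          · rw [(mem_colorExtensions.1 hψ).2 u huH]
            exact hφI u (mem_sdiff.2 ⟨hu, huH⟩)

lemma IsSpread.bind_randomExtension :
    IsSpread k ((k : ℝ≥0∞) ^ b)⁻¹ G L A (p.bind (randomExtension G L A H)) where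
  isLColoringOn ψ hψ := by
    obtain ⟨φ, hφ, hψφ⟩ := (PMF.mem_support_bind_iff _ _ _).1 hψ
    rw [support_randomExtension (hp.colorExtensions_nonempty hk hL hH hφ)] at hψφ
    exact (mem_colorExtensions.1 hψφ).1
  fix _ hv _ hc := hp.fix_bind_randomExtension hk hL hH hv hc
  forb _ hIA hI c := hp.forb_bind_randomExtension hk hL hH hIA hI c

end Step

end RandomExtension

lemma exists_isSpread [Finite V] [DecidableEq V] (hk : 3 ≤ k) (hL : ∀ v, #(L v) = k)
    (hred : ∀ A : Finset V, A.Nonempty → ∃ H, IsReducible k b G A H) (A : Finset V) :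
    ∃ p, IsSpread k ((k : ℝ≥0∞) ^ b)⁻¹ G L A p := by
  have := Fintype.ofFinite V
  induction A using Finset.strongInduction with
  | H A ih =>
    rcases A.eq_empty_or_nonempty with rfl | hA
    · have hne (v : V) : (L v).Nonempty := card_pos.1 (by rw [hL v]; lia)
      choose φ hφ using hne
      exact ⟨PMF.pure φ, isSpread_pure hφ⟩
    · obtain ⟨H, hH⟩ := hred A hA
      obtain ⟨p, hp⟩ := ih (A \ H) (sdiff_ssubset hH.subset hH.nonempty)
      exact ⟨_, hp.bind_randomExtension hk hL hH⟩

end RandomColoring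

section Flexible

variable [Fintype V] {L : V → Finset ℕ} {k b : ℕ}

lemma wFlexible_of_forall_le_measureReal {μ : Measure (V → ℕ)} [IsProbabilityMeasure μ] {ε : ℝ}
    (hμ : ∀ᵐ φ ∂μ, IsLColoring G L φ) (hε : ∀ v, ∀ c ∈ L v, ε ≤ μ.real {φ | φ v = c}) :
    WFlexible G L ε := by
  intro w hw
  let f (v : V) (c : ℕ) : (V → ℕ) → ℝ := {φ | φ v = c}.indicator fun _ => w v c
  have hmeas (v : V) (c : ℕ) : MeasurableSet {φ : V → ℕ | φ v = c} :=
    measurableSet_eq_fun (measurable_pi_apply v) measurable_const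
  have hint (v : V) (c : ℕ) : Integrable (f v c) μ := (integrable_const _).indicator (hmeas v c)
  have hintL (v : V) : Integrable (fun φ => ∑ c ∈ L v, f v c φ) μ :=
    integrable_finsetSum _ fun c _ => hint v c
  obtain ⟨φ, hφ, hle⟩ := exists_notMem_null_integral_le
    (integrable_finsetSum univ fun v _ => hintL v) (ae_iff.1 hμ)
  have hφL : IsLColoring G L φ := not_not.1 hφ
  refine ⟨φ, hφL, ?_⟩
  calc ε * WeightTotal L w
      = ∑ v, ∑ c ∈ L v, ε * w v c := by simp only [WeightTotal, mul_sum]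
    _ ≤ ∑ v, ∑ c ∈ L v, ∫ φ, f v c φ ∂μ := by
        gcongr with v _ c hc
        rw [integral_indicator_const _ (hmeas v c), smul_eq_mul]
        exact mul_le_mul_of_nonneg_right (hε v c hc) (hw v c)
    _ = ∫ φ, ∑ v, ∑ c ∈ L v, f v c φ ∂μ := by
        rw [integral_finsetSum _ fun v _ => hintL v]
        exact sum_congr rfl fun v _ => (integral_finsetSum _ fun c _ => hint v c).symm
    _ ≤ ∑ v, ∑ c ∈ L v, f v c φ := hle
    _ = ∑ v, w v (φ v) := by
        refine sum_congr rfl fun v _ => ?_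
        simp [f, Set.indicator_apply, hφL.1 v]

lemma IsSpread.wFlexible {δ : ℝ≥0∞} {p : PMF (V → ℕ)} (hp : IsSpread k δ G L univ p) :
    WFlexible G L (δ ^ (k - 1)).toReal := by
  have hcol : ∀ φ ∈ p.support, IsLColoring G L φ := fun φ hφ =>
    ⟨(hp.isLColoringOn φ hφ).1, fun u w huw =>
      (hp.isLColoringOn φ hφ).2 (mem_univ u) (mem_univ w) huw⟩
  refine wFlexible_of_forall_le_measureReal (μ := p.toMeasure) ?_ fun v c hc => ?_
  · rw [ae_iff, PMF.toMeasure_apply_eq_toOuterMeasure, PMF.toOuterMeasure_apply_eq_zero_iff]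
    exact Set.disjoint_left.2 fun φ hφ hn => hn (hcol φ hφ)
  · refine ENNReal.toReal_mono (measure_ne_top _ _) ?_
    rw [PMF.toMeasure_apply_eq_toOuterMeasure]
    exact hp.fix v (mem_univ v) c hc

theorem wFlexible_of_forall_exists_isReducible [DecidableEq V] (hk : 3 ≤ k)
    (hred : ∀ A : Finset V, A.Nonempty → ∃ H, IsReducible k b G A H) (hL : ∀ v, #(L v) = k) :
    WFlexible G L (((k : ℝ) ^ b)⁻¹ ^ (k - 1)) := by
  obtain ⟨p, hp⟩ := exists_isSpread hk hL hred univ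
  simpa using hp.wFlexible

end Flexible

section Forest

variable {L : V → Finset ℕ}

lemma exists_eq_pair_of_card_eq_two [DecidableEq α] {C : Finset α} (hC : #C = 2) {x y : α}
    (hxy : x ≠ y) : ∃ a b, a ≠ b ∧ C = {a, b} ∧ x ≠ a ∧ y ≠ b := by
  obtain ⟨a, b, hab, rfl⟩ := card_eq_two.1 hC
  by_cases h : x ≠ a ∧ y ≠ b
  · exact ⟨a, b, hab, rfl, h⟩
  · exact ⟨b, a, hab.symm, pair_comm a b, by grind⟩

lemma exists_disjoint_colorings (hL : ∀ v, #(L v) = 2)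
    (hdeg : ∀ A : Finset V, A.Nonempty → ∃ v ∈ A, degIn G A v ≤ 1) (A : Finset V) :
    ∃ φ ψ : V → ℕ, (∀ v, φ v ≠ ψ v ∧ L v = {φ v, ψ v}) ∧ IsProperOn G A φ ∧ IsProperOn G A ψ := by
  classical
  induction A using Finset.strongInduction with
  | H A ih =>
    rcases A.eq_empty_or_nonempty with rfl | hA
    · choose φ ψ h using fun v => card_eq_two.1 (hL v)
      exact ⟨φ, ψ, h, isProperOn_empty φ, isProperOn_empty ψ⟩
    obtain ⟨v, hv, hv1⟩ := hdeg A hA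
    obtain ⟨φ, ψ, hpair, hφ, hψ⟩ := ih (A.erase v) (erase_ssubset hv)
    have : Nonempty V := ⟨v⟩
    obtain ⟨x, hx⟩ := card_le_one_iff_subset_singleton.1 hv1
    have hx (u) (hu : u ∈ A) (hvu : G.Adj v u) : u = x :=
      mem_singleton.1 (hx (mem_neighborsIn.2 ⟨hu, hvu⟩))
    obtain ⟨a, b, hab, hLv, hxa, hxb⟩ := exists_eq_pair_of_card_eq_two (hL v) (hpair x).1
    refine ⟨Function.update φ v a, Function.update ψ v b, fun u => ?_,
      hφ.update fun u hu hvu => hx u hu hvu ▸ hxa, hψ.update fun u hu hvu => hx u hu hvu ▸ hxb⟩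
    rcases eq_or_ne u v with rfl | huv
    · simpa using ⟨hab, hLv⟩
    · simpa [huv] using hpair u

theorem wFlexible_half_of_forall_exists_degIn_le_one [Fintype V]
    (hdeg : ∀ A : Finset V, A.Nonempty → ∃ v ∈ A, degIn G A v ≤ 1) (hL : ∀ v, #(L v) = 2) :
    WFlexible G L (1 / 2) := by
  intro w _
  obtain ⟨φ, ψ, hpair, hφ, hψ⟩ := exists_disjoint_colorings hL hdeg univ
  have hφL : IsLColoring G L φ :=
    ⟨fun v => by simp [(hpair v).2], fun u x hux => hφ (mem_univ u) (mem_univ x) hux⟩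
  have hψL : IsLColoring G L ψ :=
    ⟨fun v => by simp [(hpair v).2], fun u x hux => hψ (mem_univ u) (mem_univ x) hux⟩
  have htotal : WeightTotal L w = ∑ v, w v (φ v) + ∑ v, w v (ψ v) := by
    rw [WeightTotal, ← sum_add_distrib]
    refine sum_congr rfl fun v _ => ?_
    rw [(hpair v).2, sum_pair (hpair v).1]
  rcases le_total (∑ v, w v (φ v)) (∑ v, w v (ψ v)) with hle | hle
  · exact ⟨ψ, hψL, by linarith⟩
  · exact ⟨φ, hφL, by linarith⟩

end Forest

end

theorem stmt4 (d : ℕ) :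
    ∃ ε : ℝ, 0 < ε ∧
      ∀ (V : Type) [Fintype V] (G : SimpleGraph V) (L : V → Finset ℕ),
        MadLT G (d + 1 + 2 / (d + 4)) → (∀ v, (L v).card = d + 2) → WFlexible G L ε := by
  classical
  rcases Nat.eq_zero_or_pos d with rfl | hd
  · refine ⟨1 / 2, by norm_num, fun V _ G L hG hL => ?_⟩
    have hG2 : MadLT G (2 : ℕ) := hG.mono (by norm_num)
    exact wFlexible_half_of_forall_exists_degIn_le_one
      (fun A hA => (hG2.exists_degIn_lt hA).imp fun v hv => ⟨hv.1, Nat.le_of_lt_succ hv.2⟩) hL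
  · exact ⟨(((d + 2 : ℕ) : ℝ) ^ (d + 1))⁻¹ ^ (d + 1), by positivity, fun V _ G L hG hL =>
      wFlexible_of_forall_exists_isReducible (by lia) (fun A hA => hG.exists_isReducible hA) hL⟩
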